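/- arXiv:1401.0012 — 2 statements merged into one kernel-verified Lean document; each statement's English description precedes it below -/
import Mathlib

section
/- Define cf : List ℕ → ℚ by cf([a]) = a and cf(a :: L) = a + 1/cf(L) for L nonempty. Let L = [a0, a1, ..., ak] be a nonempty list of natural numbers with a_i ≥ 1 for all i ≥ 1, and assume a0 ≥ 1 or k ≥ 1. Let s = a0 + a1 + ... + ak. Then the positive rational cf(L) appears in row s − 1 of the Calkin-Wilf tree: there exists j with 1 ≤ j ≤ 2^(s−1) such that c(s−1, j) = cf(L). (Depth formula: a positive reduced rational with continued fraction [a0, a1, ..., ak] has depth a0 + a1 + ... + ak − 1.) -/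
/-!
Each row of the tree is closed under inversion, because the inverses of the two children
`x / (x + 1)` and `x + 1` of `x` are the right and left child of `x⁻¹` (`inv_mem_cwRow`). Moreover, taking
the right child `a` times leads from `x` in row `n` to `x + a` in row `n + a`
(`add_mem_cwRow`). A continued fraction `a + 1 / y` is thus obtained from `y` by an inversion,
which stays in the same row, followed by `a` steps down, and induction on the list of partial
quotients gives the depth.
-/

/-- Row `n` of the Calkin-Wilf tree, as a list of rationals. -/
def cwRow : ℕ → List ℚ
  | 0 => [1]
  | n + 1 => (cwRow n).flatMap fun x => [x / (x + 1), x + 1]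

/-- `c n j` is the `j`-th entry (1-indexed) of row `n` of the Calkin-Wilf tree. -/
def c (n j : ℕ) : ℚ := (cwRow n).getD (j - 1) 0

/-- Finite continued fraction `[a₀, a₁, …, a_k] = a₀ + 1/(a₁ + 1/(⋯ + 1/a_k))`. -/
def cf : List ℕ → ℚ
  | [] => 0
  | [a] => (a : ℚ)
  | a :: b :: L => (a : ℚ) + 1 / cf (b :: L)

lemma mem_cwRow_succ {n : ℕ} {y : ℚ} :
    y ∈ cwRow (n + 1) ↔ ∃ x ∈ cwRow n, y = x / (x + 1) ∨ y = x + 1 := by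
  simp [cwRow]

lemma cwRow_length (n : ℕ) : (cwRow n).length = 2 ^ n := by
  induction n with
  | zero => simp [cwRow]
  | succ n ih => simp [cwRow, List.length_flatMap, ih, pow_succ]

lemma cwRow_pos {n : ℕ} : ∀ {x : ℚ}, x ∈ cwRow n → 0 < x := by
  induction n with
  | zero => simp [cwRow]
  | succ n ih =>
    intro y hy
    obtain ⟨x, hx, rfl | rfl⟩ := mem_cwRow_succ.1 hy <;> have := ih hx <;> positivity

lemma inv_mem_cwRow {n : ℕ} : ∀ {x : ℚ}, x ∈ cwRow n → x⁻¹ ∈ cwRow n := by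
  induction n with
  | zero => simp [cwRow]
  | succ n ih =>
    intro y hy
    obtain ⟨x, hx, h⟩ := mem_cwRow_succ.1 hy
    have hpos := cwRow_pos hx
    refine mem_cwRow_succ.2 ⟨x⁻¹, ih hx, ?_⟩
    rcases h with rfl | rfl
    · right
      field_simp
      ring
    · left
      field_simp
      ring

lemma add_mem_cwRow {n : ℕ} {x : ℚ} (hx : x ∈ cwRow n) (a : ℕ) : x + a ∈ cwRow (n + a) := by
  induction a with
  | zero => simpa using hx
  | succ a ih => exact mem_cwRow_succ.2 ⟨_, ih, Or.inr (by push_cast; ring)⟩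

/-- The depth formula as a membership statement. -/
lemma cf_mem_cwRow (L : List ℕ) : L ≠ [] → (∀ a ∈ L.tail, 1 ≤ a) →
    (1 ≤ L.headI ∨ 2 ≤ L.length) → cf L ∈ cwRow (L.sum - 1) := by
  induction L with
  | nil => simp
  | cons a L ih =>
    intro _ htail hhead
    cases L with
    | nil =>
      have ha : 1 ≤ a := by simpa using hhead
      obtain ⟨m, rfl⟩ := Nat.exists_eq_add_of_le ha
      have h1 : (1 : ℚ) ∈ cwRow 0 := by simp [cwRow]
      simpa [cf] using add_mem_cwRow h1 m
    | cons b L =>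
      have hb : 1 ≤ b := htail b (by simp)
      have hy := ih (by simp) (fun x hx => htail x (List.mem_of_mem_tail hx)) (Or.inl hb)
      have h := add_mem_cwRow (inv_mem_cwRow hy) a
      have hsum : (a :: b :: L).sum - 1 = (b :: L).sum - 1 + a := by
        simp only [List.sum_cons]
        omega
      rw [hsum, cf, one_div, add_comm (a : ℚ)]
      exact h

theorem depth_formula (L : List ℕ) (hne : L ≠ [])
    (htail : ∀ a ∈ L.tail, 1 ≤ a) (hhead : 1 ≤ L.headI ∨ 2 ≤ L.length) :
    ∃ j, 1 ≤ j ∧ j ≤ 2 ^ (L.sum - 1) ∧ c (L.sum - 1) j = cf L := by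
  obtain ⟨i, hi, h⟩ := List.mem_iff_getElem.1 (cf_mem_cwRow L hne htail hhead)
  refine ⟨i + 1, by omega, by rw [← cwRow_length]; omega, ?_⟩
  rw [c, Nat.add_sub_cancel, List.getD_eq_getElem _ _ hi, h]
end

section
/- For every n ≥ 1 and every j with 1 ≤ j ≤ 2^n − 1, writing W(n,j) = !![a,b;c,d], there exists a natural number q such that W(n,j+1) = !![c, d; (2q+1)·c − a, (2q+1)·d − b]. (Successor formula: w_{n,j+1}(z) = 1/(2[w_{n,j}(z)] + 1 − w_{n,j}(z)), where q = [w_{n,j}(z)] is the integer part of w_{n,j}(z).) -/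
/-!
Call `N` a successor of `M` when `N` arises from `M` by the formula of the theorem for some `q`.
For every `M`, the matrix `R1 * M` is a successor of `L1 * M` with `q = 0`; and if `N` is a successor
of `M` with parameter `q`, then `L1 * N` is a successor of `R1 * M` with parameter `q + 1`. Consecutive
entries of row `n + 1` are of one of these two kinds, so by induction on `n` every row is a chain
for the successor relation.
-/

def L1 : Matrix (Fin 2) (Fin 2) ℤ := !![1, 0; 1, 1]

def R1 : Matrix (Fin 2) (Fin 2) ℤ := !![1, 1; 0, 1]

/-- Row `n` of the matrix tree, as a list of matrices. -/
def mRow : ℕ → List (Matrix (Fin 2) (Fin 2) ℤ)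
  | 0 => [1]
  | n + 1 => (mRow n).flatMap fun M => [L1 * M, R1 * M]

/-- `W n j` is the `j`-th entry (1-indexed) of row `n` of the matrix tree. -/
def W (n j : ℕ) : Matrix (Fin 2) (Fin 2) ℤ := (mRow n).getD (j - 1) 0

/-- `N` is obtained from `M = !![a, b; c, d]` as `!![c, d; (2 * q + 1) * c - a, (2 * q + 1) * d - b]`
for some natural number `q`. -/
def IsSucc (M N : Matrix (Fin 2) (Fin 2) ℤ) : Prop :=
  ∃ q : ℕ, N = !![M 1 0, M 1 1;
    (2 * (q : ℤ) + 1) * M 1 0 - M 0 0, (2 * (q : ℤ) + 1) * M 1 1 - M 0 1]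

lemma isSucc_siblings (M : Matrix (Fin 2) (Fin 2) ℤ) : IsSucc (L1 * M) (R1 * M) := by
  refine ⟨0, ?_⟩
  ext i j
  fin_cases i <;> fin_cases j <;> simp [L1, R1, Matrix.mul_apply, Fin.sum_univ_two]

lemma IsSucc.cousins {M N : Matrix (Fin 2) (Fin 2) ℤ} (h : IsSucc M N) :
    IsSucc (R1 * M) (L1 * N) := by
  obtain ⟨q, rfl⟩ := h
  refine ⟨q + 1, ?_⟩
  ext i j
  fin_cases i <;> fin_cases j <;> simp [L1, R1, Matrix.mul_apply, Fin.sum_univ_two] <;> ring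

lemma isChain_children (l : List (Matrix (Fin 2) (Fin 2) ℤ)) (h : l.IsChain IsSucc) :
    (l.flatMap fun M => [L1 * M, R1 * M]).IsChain IsSucc := by
  induction l with
  | nil => simp
  | cons M l ih =>
    cases l with
    | nil => simpa using isSucc_siblings M
    | cons N l =>
      rw [List.isChain_cons_cons] at h
      have ih' := ih h.2
      simp only [List.flatMap_cons, List.cons_append, List.nil_append,
        List.isChain_cons_cons] at ih' ⊢
      exact ⟨isSucc_siblings M, h.1.cousins, ih'⟩

lemma isChain_mRow (n : ℕ) : (mRow n).IsChain IsSucc := by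
  induction n with
  | zero => simp [mRow]
  | succ n ih => exact isChain_children _ ih

lemma length_mRow (n : ℕ) : (mRow n).length = 2 ^ n := by
  induction n with
  | zero => simp [mRow]
  | succ n ih => simp [mRow, List.length_flatMap, ih, pow_succ]

theorem matrix_successor_formula (n j : ℕ) (hn : 1 ≤ n) (h1 : 1 ≤ j) (h2 : j ≤ 2 ^ n - 1) :
    ∃ q : ℕ,
      W n (j + 1) =
        !![W n j 1 0, W n j 1 1;
           (2 * (q : ℤ) + 1) * W n j 1 0 - W n j 0 0,
           (2 * (q : ℤ) + 1) * W n j 1 1 - W n j 0 1] := by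
  have hlt : j - 1 + 1 < (mRow n).length := by
    rw [length_mRow]
    omega
  have key := List.isChain_iff_getElem.mp (isChain_mRow n) (j - 1) hlt
  have e1 : W n j = (mRow n)[j - 1] := List.getD_eq_getElem _ _ (by omega)
  have e2 : W n (j + 1) = (mRow n)[j - 1 + 1] := by
    rw [W, List.getD_eq_getElem _ _ (by omega)]
    congr 1
    omega
  rw [e1, e2]
  exact key
end
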